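/- arXiv:2503.12241 — 2 statements merged into one kernel-verified Lean document; each statement's English description precedes it below -/
import Mathlib

section
/- Let S = ⟨a, a + d, a + 2d, …, a + kd⟩ with d ≥ 1, 2 ≤ k < a, and gcd(a, d) = 1, and write a − 1 = qk + r with q, r ∈ ℤ_{≥0} and 0 ≤ r < k. Then Δ_∞(S) = {1, 2, …, q + d + 1}. -/
open Finset

/-- `Zfac a x`: the set of factorizations of `x` with respect to the generators `a`. -/
def Zfac {k : ℕ} (a : Fin k → ℕ) (x : ℕ) : Set (Fin k → ℕ) :=
  {z | ∑ j, z j * a j = x}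

/-- The `∞`-length of a factorization: the maximum coordinate. -/
def linf {k : ℕ} (z : Fin k → ℕ) : ℕ :=
  Finset.univ.sup z

/-- The `0`-length of a factorization: the size of its support. -/
def lzero {k : ℕ} (z : Fin k → ℕ) : ℕ :=
  (Finset.univ.filter fun i => z i ≠ 0).card

/-- `𝓛∞(x)`: the set of `∞`-lengths of factorizations of `x`. -/
def LinfSet {k : ℕ} (a : Fin k → ℕ) (x : ℕ) : Set ℕ :=
  linf '' Zfac a x

/-- `𝓛∞(x, i)`: `∞`-lengths of factorizations whose maximum coordinate is attained at `i`. -/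
def LinfSetI {k : ℕ} (a : Fin k → ℕ) (x : ℕ) (i : Fin k) : Set ℕ :=
  linf '' {z | z ∈ Zfac a x ∧ z i = linf z}

/-- `𝓛₀(x)`: the set of `0`-lengths of factorizations of `x`. -/
def LzeroSet {k : ℕ} (a : Fin k → ℕ) (x : ℕ) : Set ℕ :=
  lzero '' Zfac a x

/-- The set of differences between consecutive elements of a set `T ⊆ ℕ`. -/
def deltaSet (T : Set ℕ) : Set ℕ :=
  {d | ∃ u ∈ T, ∃ v ∈ T, u < v ∧ v - u = d ∧ ∀ t ∈ T, ¬(u < t ∧ t < v)}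

/-- `Δ∞(x)`. -/
def DeltaInf {k : ℕ} (a : Fin k → ℕ) (x : ℕ) : Set ℕ := deltaSet (LinfSet a x)

/-- `Δ∞(S) = ⋃ x ∈ S, Δ∞(x)` (for `x ∉ S` the contribution is empty). -/
def DeltaInfS {k : ℕ} (a : Fin k → ℕ) : Set ℕ := ⋃ x : ℕ, DeltaInf a x

/-- `Δ₀(x)`. -/
def DeltaZero {k : ℕ} (a : Fin k → ℕ) (x : ℕ) : Set ℕ := deltaSet (LzeroSet a x)

/-- `Δ₀(S) = ⋃ x ∈ S, Δ₀(x)` (for `x ∉ S` the contribution is empty). -/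
def DeltaZeroS {k : ℕ} (a : Fin k → ℕ) : Set ℕ := ⋃ x : ℕ, DeltaZero a x

/-- `a` is a system of minimal generators: no generator is a `ℕ`-combination of the others. -/
def MinimalGens {k : ℕ} (a : Fin k → ℕ) : Prop :=
  ∀ i : Fin k, ¬ ∃ z : Fin k → ℕ, z i = 0 ∧ ∑ j, z j * a j = a i

/-- total length -/
def sLen {k : ℕ} (z : Fin k → ℕ) : ℕ := ∑ i, z i

/-- weight -/
def sWt {k : ℕ} (z : Fin k → ℕ) : ℕ := ∑ i, z i * (i : ℕ)

lemma zval {k : ℕ} (a d : ℕ) (z : Fin k → ℕ) :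
    ∑ j, z j * (a + (j : ℕ) * d) = sLen z * a + sWt z * d := by
  unfold sLen sWt
  rw [Finset.sum_mul, Finset.sum_mul, ← Finset.sum_add_distrib]
  exact Finset.sum_congr rfl fun i _ => by ring

lemma sLen_add {k : ℕ} (z w : Fin k → ℕ) : sLen (z + w) = sLen z + sLen w := by
  simp [sLen, Finset.sum_add_distrib]

lemma sWt_add {k : ℕ} (z w : Fin k → ℕ) : sWt (z + w) = sWt z + sWt w := by
  simp [sWt, Finset.sum_add_distrib, add_mul]

lemma sLen_single {k : ℕ} (i : Fin k) (c : ℕ) : sLen (Pi.single i c) = c := by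
  simp [sLen]

lemma sWt_single {k : ℕ} (i : Fin k) (c : ℕ) : sWt (Pi.single i c) = c * (i : ℕ) := by
  unfold sWt
  rw [Finset.sum_eq_single i]
  · simp
  · intro b _ hb
    simp [hb]
  · simp

lemma sWt_le {k : ℕ} (z : Fin (k + 1) → ℕ) : sWt z ≤ k * sLen z := by
  unfold sWt sLen
  rw [Finset.mul_sum]
  refine Finset.sum_le_sum fun i _ => ?_
  rw [mul_comm]
  exact Nat.mul_le_mul_right _ (by omega)

/-- step relation -/
def stepB {k : ℕ} (a d B : ℕ) (z w : Fin k → ℕ) : Prop :=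
  sLen z * a + sWt z * d = sLen w * a + sWt w * d ∧ ∀ i, z i ≤ w i + B ∧ w i ≤ z i + B

/-- reachability -/
def reach {k : ℕ} (a d B : ℕ) : (Fin k → ℕ) → (Fin k → ℕ) → Prop :=
  Relation.ReflTransGen (stepB a d B)

lemma stepB_symm {k : ℕ} {a d B : ℕ} {z w : Fin k → ℕ} (h : stepB a d B z w) :
    stepB a d B w z := ⟨h.1.symm, fun i => ⟨(h.2 i).2, (h.2 i).1⟩⟩

lemma reach_symm {k : ℕ} {a d B : ℕ} {z w : Fin k → ℕ} (h : reach a d B z w) :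
    reach a d B w z :=
  haveI : Std.Symm (stepB (k := k) a d B) := ⟨fun _ _ => stepB_symm⟩
  (Relation.ReflTransGen.stdSymm (r := stepB (k := k) a d B)).symm _ _ h

lemma reach_add {k : ℕ} {a d B : ℕ} {z w : Fin k → ℕ} (e : Fin k → ℕ)
    (h : reach a d B z w) : reach a d B (z + e) (w + e) := by
  induction h with
  | refl => exact Relation.ReflTransGen.refl
  | tail _ h2 ih =>
    refine ih.tail ⟨?_, ?_⟩
    · have := h2.1
      simp only [sLen_add, sWt_add, add_mul]
      omega
    · intro i
      have := h2.2 i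
      simp only [Pi.add_apply]
      omega

/-- spread vector: `A` at 0, `e` at `s`, `p` at `k`. -/
def vec (k A s e p : ℕ) : Fin (k + 1) → ℕ := fun i =>
  (if (i : ℕ) = 0 then A else 0) + (if (i : ℕ) = s then e else 0) + (if (i : ℕ) = k then p else 0)

lemma vec_eq (k A s e p : ℕ) (hs : s < k + 1) : vec k A s e p =
    Pi.single (0 : Fin (k + 1)) A + Pi.single (⟨s, hs⟩ : Fin (k + 1)) e
      + Pi.single (Fin.last k) p := by
  funext i
  simp only [vec, Pi.add_apply, Pi.single_apply, Fin.ext_iff, Fin.val_last, Fin.val_zero]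

lemma vec_len (k A s e p : ℕ) (hs : s < k + 1) : sLen (vec k A s e p) = A + e + p := by
  rw [vec_eq k A s e p hs]; simp [sLen_add, sLen_single]

lemma vec_wt (k A s e p : ℕ) (hs : s < k + 1) : sWt (vec k A s e p) = e * s + p * k := by
  rw [vec_eq k A s e p hs]; simp [sWt_add, sWt_single]

/-- canonical vector -/
def can (k n m : ℕ) : Fin (k + 1) → ℕ :=
  vec k (n - (m + k - 1) / k) (m % k) ((m + k - 1) / k - m / k) (m / k)

lemma ceil_cases (k m : ℕ) (hk : 2 ≤ k) :
    (m % k = 0 ∧ (m + k - 1) / k = m / k) ∨ (0 < m % k ∧ (m + k - 1) / k = m / k + 1) := by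
  have h := Nat.div_add_mod m k
  have hlt := Nat.mod_lt m (by omega : 0 < k)
  rcases Nat.eq_zero_or_pos (m % k) with h0 | h0
  · left
    refine ⟨h0, ?_⟩
    apply Nat.div_eq_of_lt_le
    · rw [mul_comm]; omega
    · rw [mul_comm, Nat.mul_succ]; omega
  · right
    refine ⟨h0, ?_⟩
    apply Nat.div_eq_of_lt_le
    · rw [mul_comm, Nat.mul_succ]; omega
    · rw [mul_comm, Nat.mul_succ, Nat.mul_succ]; omega

lemma ceil_le (k m n : ℕ) (hk : 2 ≤ k) : (m + k - 1) / k ≤ n ↔ m ≤ k * n := by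
  rw [← Nat.lt_succ_iff, Nat.div_lt_iff_lt_mul (by omega), Nat.succ_mul, mul_comm n k]
  omega

lemma can_len (k n m : ℕ) (hk : 2 ≤ k) (h : m ≤ k * n) : sLen (can k n m) = n := by
  have hlt := Nat.mod_lt m (by omega : 0 < k)
  unfold can
  rw [vec_len _ _ _ _ _ (by omega)]
  have := (ceil_le k m n hk).2 h
  rcases ceil_cases k m hk with h | h <;> omega

lemma can_wt (k n m : ℕ) (hk : 2 ≤ k) : sWt (can k n m) = m := by
  have hlt := Nat.mod_lt m (by omega : 0 < k)
  unfold can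
  rw [vec_wt _ _ _ _ _ (by omega)]
  have hd := Nat.div_add_mod m k
  rcases ceil_cases k m hk with ⟨h, h'⟩ | ⟨h, h'⟩
  · rw [h', h, mul_comm (m / k)]; omega
  · rw [h', mul_comm (m / k)]; simp only [Nat.add_sub_cancel_left]; omega

/-- division increments -/
lemma div_incr (k m b : ℕ) : m / k ≤ (m + b) / k := Nat.div_le_div_right (by omega)

lemma div_incr' (k m b c : ℕ) (hk : 2 ≤ k) (hb : b ≤ k * c) : (m + b) / k ≤ m / k + c := by
  calc (m + b) / k ≤ (m + k * c) / k := Nat.div_le_div_right (by omega)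
    _ = m / k + c := Nat.add_mul_div_left _ _ (by omega)

lemma step_can_single {k : ℕ} (a d B n m : ℕ) (hk : 2 ≤ k) (hB : 2 ≤ B) (i : Fin (k + 1))
    (h : m ≤ k * n) :
    stepB a d B (can k n m + Pi.single i 1) (can k (n + 1) (m + i)) := by
  have hi : (i : ℕ) ≤ k := by omega
  have h' : m + i ≤ k * (n + 1) := by rw [Nat.mul_succ]; omega
  constructor
  · rw [sLen_add, sWt_add, sLen_single, sWt_single, can_len k n m hk h, can_wt k n m hk,
      can_len k _ _ hk h', can_wt k _ _ hk]
    simp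
  · intro j
    have c1 := (ceil_le k m n hk).2 h
    have c2 := (ceil_le k _ _ hk).2 h'
    have e1 : (m + i) / k ≤ m / k + 1 := div_incr' k m i 1 hk (by omega)
    have e2 := div_incr k m i
    have e3 : (m + i + k - 1) / k ≤ (m + k - 1) / k + 1 := by
      have := div_incr' k (m + k - 1) i 1 hk (by omega)
      rwa [show m + k - 1 + i = m + i + k - 1 by omega] at this
    have e4 : (m + k - 1) / k ≤ (m + i + k - 1) / k := Nat.div_le_div_right (by omega)
    have f1 := ceil_cases k m hk
    have f2 := ceil_cases k (m + i) hk
    have g1 := Nat.mod_lt m (by omega : 0 < k)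
    have g2 := Nat.mod_lt (m + i) (by omega : 0 < k)
    simp only [Pi.add_apply, Pi.single_apply, can, vec, Fin.ext_iff]
    generalize (m + i + k - 1) / k = C2 at *
    generalize (m + k - 1) / k = C1 at *
    generalize (m + i) / k = p2 at *
    generalize m / k = p1 at *
    generalize (m + i) % k = s2 at *
    generalize m % k = s1 at *
    clear h h'
    generalize (j : ℕ) = jj at *
    generalize (i : ℕ) = ii at *
    split_ifs <;> omega

lemma reach_can {k : ℕ} (a d B : ℕ) (hk : 2 ≤ k) (hB : 2 ≤ B) :
    ∀ n (z : Fin (k + 1) → ℕ), sLen z = n → reach a d B z (can k n (sWt z)) := by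
  intro n
  induction n with
  | zero =>
    intro z hz
    have hz0 : ∀ i, z i = 0 := by
      intro i
      have := Finset.single_le_sum (f := z) (fun _ _ => Nat.zero_le _) (Finset.mem_univ i)
      unfold sLen at hz
      omega
    have h0 : sWt z = 0 := by simp [sWt, hz0]
    rw [h0]
    refine Relation.ReflTransGen.single ⟨?_, ?_⟩
    · rw [can_len k 0 0 hk (by simp), can_wt k 0 0 hk, hz, h0]
    · intro i
      have := Finset.single_le_sum (f := can k 0 0) (fun _ _ => Nat.zero_le _) (Finset.mem_univ i)
      have h1 := can_len k 0 0 hk (by simp)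
      unfold sLen at h1
      have := hz0 i
      omega
  | succ n ih =>
    intro z hz
    obtain ⟨i, hi⟩ : ∃ i, z i ≠ 0 := by
      by_contra! h
      simp [sLen, h] at hz
    obtain ⟨w, rfl⟩ : ∃ w : Fin (k + 1) → ℕ, z = w + Pi.single i 1 := by
      refine ⟨fun j => z j - (Pi.single i 1 : Fin (k + 1) → ℕ) j, ?_⟩
      funext j
      rw [Pi.add_apply]
      by_cases hj : j = i
      · subst hj
        rw [Pi.single_eq_same]
        omega
      · rw [Pi.single_eq_of_ne hj]
        omega
    rw [sLen_add, sLen_single] at hz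
    have hw : sLen w = n := by omega
    rw [sWt_add, sWt_single, one_mul]
    refine (reach_add (Pi.single i 1) (ih w hw)).tail ?_
    exact step_can_single a d B n _ hk hB i (hw ▸ sWt_le w)

lemma step_can {k : ℕ} (a d q n m : ℕ) (hk : 2 ≤ k) (ha : a ≤ k * (q + 1))
    (h : m + a ≤ k * n) :
    stepB a d (q + d + 1) (can k (n + d) m) (can k n (m + a)) := by
  have h' : m ≤ k * (n + d) := by rw [Nat.mul_add]; omega
  constructor
  · rw [can_len k _ _ hk h', can_wt k _ _ hk, can_len k _ _ hk h, can_wt k _ _ hk]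
    ring
  · intro j
    have c1 := (ceil_le k _ _ hk).2 h
    have c2 := (ceil_le k _ _ hk).2 h'
    have e1 : (m + a) / k ≤ m / k + (q + 1) := div_incr' k m a _ hk ha
    have e2 := div_incr k m a
    have e3 : (m + a + k - 1) / k ≤ (m + k - 1) / k + (q + 1) := by
      have := div_incr' k (m + k - 1) a _ hk ha
      rwa [show m + k - 1 + a = m + a + k - 1 by omega] at this
    have e4 : (m + k - 1) / k ≤ (m + a + k - 1) / k := Nat.div_le_div_right (by omega)
    have f1 := ceil_cases k m hk
    have f2 := ceil_cases k (m + a) hk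
    have g1 := Nat.mod_lt m (by omega : 0 < k)
    have g2 := Nat.mod_lt (m + a) (by omega : 0 < k)
    simp only [can, vec]
    generalize (m + a + k - 1) / k = C2 at *
    generalize (m + k - 1) / k = C1 at *
    generalize (m + a) / k = p2 at *
    generalize m / k = p1 at *
    generalize (m + a) % k = s2 at *
    generalize m % k = s1 at *
    clear h h' ha
    generalize (j : ℕ) = jj at *
    split_ifs <;> omega

lemma reach_can_can {k : ℕ} (a d q n : ℕ) (hk : 2 ≤ k) (ha : a ≤ k * (q + 1)) :
    ∀ t m, m + a * t ≤ k * n →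
    reach a d (q + d + 1) (can k (n + d * t) m) (can k n (m + a * t)) := by
  intro t
  induction t with
  | zero => intro m _; exact Relation.ReflTransGen.refl
  | succ t ih =>
    intro m h
    have e : m + a + a * t = m + a * (t + 1) := by ring
    have := ih (m + a) (by rw [e]; exact h)
    rw [e] at this
    refine Relation.ReflTransGen.head ?_ this
    have h2 := step_can a d q (n + d * t) m hk ha (by
      rw [Nat.mul_add]
      have : m + a ≤ m + a * (t + 1) := by rw [Nat.mul_succ]; omega
      omega)
    rwa [show n + d * t + d = n + d * (t + 1) by ring] at h2

lemma len_diff (a d n n' m m' : ℕ) (hd : 1 ≤ d) (hcop : Nat.Coprime a d) (hn : n' ≤ n)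
    (h : n * a + m * d = n' * a + m' * d) : ∃ t, n = n' + d * t ∧ m' = m + a * t := by
  obtain ⟨s, rfl⟩ := Nat.exists_eq_add_of_le hn
  have h1 : s * a + m * d = m' * d := by
    have : (n' + s) * a = n' * a + s * a := by ring
    omega
  have hdvd : d ∣ s * a := by
    have h2 : d ∣ s * a + m * d := h1 ▸ Dvd.intro_left _ rfl
    exact (Nat.dvd_add_left (Dvd.intro_left _ rfl)).1 h2
  obtain ⟨t, rfl⟩ := (hcop.symm.dvd_mul_right).1 hdvd
  refine ⟨t, rfl, ?_⟩
  apply Nat.eq_of_mul_eq_mul_right (show 0 < d from hd)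
  rw [← h1]; ring

lemma reach_all_aux {k : ℕ} (a d q : ℕ) (hd : 1 ≤ d) (hk : 2 ≤ k) (hcop : Nat.Coprime a d)
    (hB : 1 ≤ q) (ha : a ≤ k * (q + 1)) (z w : Fin (k + 1) → ℕ) (hn : sLen w ≤ sLen z)
    (h : sLen z * a + sWt z * d = sLen w * a + sWt w * d) : reach a d (q + d + 1) z w := by
  obtain ⟨t, h1, h2⟩ := len_diff a d _ _ _ _ hd hcop hn h
  have r1 := reach_can a d (q + d + 1) hk (by omega) _ z rfl
  have r2 := reach_can a d (q + d + 1) hk (by omega) _ w rfl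
  have r3 := reach_can_can a d q (sLen w) hk ha t (sWt z) (h2 ▸ sWt_le w)
  rw [← h1, ← h2] at r3
  exact (r1.trans r3).trans (reach_symm r2)

lemma reach_all {k : ℕ} (a d q : ℕ) (hd : 1 ≤ d) (hk : 2 ≤ k) (hcop : Nat.Coprime a d)
    (hB : 1 ≤ q) (ha : a ≤ k * (q + 1)) (z w : Fin (k + 1) → ℕ)
    (h : sLen z * a + sWt z * d = sLen w * a + sWt w * d) : reach a d (q + d + 1) z w := by
  rcases le_total (sLen w) (sLen z) with hn | hn
  · exact reach_all_aux a d q hd hk hcop hB ha z w hn h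
  · exact reach_symm (reach_all_aux a d q hd hk hcop hB ha w z hn h.symm)

lemma linf_step {k : ℕ} {a d B : ℕ} {z w : Fin k → ℕ} (h : stepB a d B z w) :
    linf w ≤ linf z + B := by
  unfold linf
  refine Finset.sup_le fun i _ => ?_
  have := Finset.le_sup (f := z) (Finset.mem_univ i)
  have := (h.2 i).2
  omega

lemma reach_low {k : ℕ} {a d B u v x : ℕ} {z w : Fin k → ℕ} (h : reach a d B z w)
    (hx : sLen z * a + sWt z * d = x) (hu : linf z ≤ u) (huv : u + B < v)
    (hno : ∀ y : Fin k → ℕ, sLen y * a + sWt y * d = x → ¬ (u < linf y ∧ linf y < v)) :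
    sLen w * a + sWt w * d = x ∧ linf w ≤ u := by
  induction h with
  | refl => exact ⟨hx, hu⟩
  | tail _ h2 ih =>
    have e := h2.1.symm.trans ih.1
    refine ⟨e, ?_⟩
    have := linf_step h2
    have := hno _ e
    omega

lemma exists_j (a d k c q : ℕ) (hk : 2 ≤ k) (hc : c ≤ q + d + 1) 
    (h0 : (0 + a + k - 1) / k = q + 1) : ∃ j, (j + a + k - 1) / k + d = j + c := by
  classical
  have hex : ∃ j, (j + a + k - 1) / k + d ≤ j + c := by
    refine ⟨a + 2 * d + 2, ?_⟩
    have : (a + 2 * d + 2 + a + k - 1) / k ≤ a + d + 2 := by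
      rw [ceil_le _ _ _ hk]
      calc a + 2 * d + 2 + a ≤ 2 * (a + d + 2) := by omega
        _ ≤ _ := Nat.mul_le_mul_right _ hk
    omega
  refine ⟨Nat.find hex, ?_⟩
  have h1 := Nat.find_spec hex
  rcases Nat.eq_zero_or_pos (Nat.find hex) with hz | hz
  · rw [hz] at h1 ⊢; omega
  · have h2 := Nat.find_min hex (Nat.sub_lt hz one_pos)
    have h3 : (Nat.find hex - 1 + a + k - 1) / k ≤ (Nat.find hex + a + k - 1) / k :=
      Nat.div_le_div_right (by omega)
    omega

lemma tail_le {k : ℕ} (z : Fin (k + 1) → ℕ) :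
    ∃ y, sLen z = z 0 + y ∧ y ≤ sWt z ∧ sWt z ≤ k * y := by
  refine ⟨∑ i : Fin k, z i.succ, ?_, ?_, ?_⟩
  · simp [sLen, Fin.sum_univ_succ]
  · simp only [sWt, Fin.sum_univ_succ]
    refine le_trans ?_ (Nat.le_add_left _ _)
    refine Finset.sum_le_sum fun i _ => ?_
    simp only [Fin.val_succ]
    nlinarith [Nat.zero_le (z i.succ * i)]
  · simp only [sWt, Fin.sum_univ_succ, Fin.val_zero, mul_zero, zero_add]
    rw [Finset.mul_sum]
    refine Finset.sum_le_sum fun i _ => ?_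
    rw [mul_comm]
    exact Nat.mul_le_mul_right _ (by simp only [Fin.val_succ]; omega)

lemma coord_le {k : ℕ} (z : Fin (k + 1) → ℕ) (i : Fin (k + 1)) (a d : ℕ) :
    z i * (a + i * d) ≤ sLen z * a + sWt z * d := by
  rw [← zval]
  exact Finset.single_le_sum (f := fun j : Fin (k + 1) => z j * (a + (j : ℕ) * d))
    (fun _ _ => Nat.zero_le _) (Finset.mem_univ i)

lemma linf_eq {k : ℕ} (z : Fin (k + 1) → ℕ) (M : ℕ) (h : ∀ i, i ≠ 0 → z i ≤ M) (h0 : M ≤ z 0) :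
    linf z = z 0 := by
  apply le_antisymm
  · refine Finset.sup_le fun i _ => ?_
    by_cases hi : i = 0
    · rw [hi]
    · exact (h i hi).trans h0
  · exact Finset.le_sup (f := z) (Finset.mem_univ 0)

lemma linf_le {k : ℕ} (z : Fin (k + 1) → ℕ) (M : ℕ) (h : ∀ i, i ≠ 0 → z i ≤ M) (h0 : z 0 ≤ M) :
    linf z ≤ M := by
  refine Finset.sup_le fun i _ => ?_
  by_cases hi : i = 0
  · rw [hi]; exact h0
  · exact h i hi

lemma realize (a d k q c : ℕ) (hd : 1 ≤ d) (hk : 2 ≤ k) (ha0 : 1 ≤ a) (hcop : Nat.Coprime a d)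
    (hc1 : 1 ≤ c) (hc : c ≤ q + d + 1) (h0 : (0 + a + k - 1) / k = q + 1) :
    ∃ x, ∃ z w : Fin (k + 1) → ℕ, sLen z * a + sWt z * d = x ∧ sLen w * a + sWt w * d = x ∧
      linf w = linf z + c ∧
      ∀ y : Fin (k + 1) → ℕ, sLen y * a + sWt y * d = x → ¬ (linf z < linf y ∧ linf y < linf w) := by
  obtain ⟨j, hj⟩ := exists_j a d k c q hk hc h0
  obtain ⟨M, hM⟩ : ∃ M, M = (j + c) * a + j * d := ⟨_, rfl⟩
  -- u = M, N = M + j + c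
  have hMbound : ∀ y : Fin (k + 1) → ℕ, sLen y * a + sWt y * d = (M + j + c) * a + j * d →
      ∀ i, i ≠ 0 → y i ≤ M := by
    intro y hy i hi
    have h1 := coord_le y i a d
    rw [hy] at h1
    have hi1 : 1 ≤ (i : ℕ) := by
      rcases Nat.eq_zero_or_pos (i : ℕ) with h | h
      · exact absurd (Fin.ext h) hi
      · exact h
    have h2 : y i * (a + d) ≤ y i * (a + i * d) :=
      Nat.mul_le_mul_left _ (Nat.add_le_add_left (Nat.le_mul_of_pos_left _ hi1) _)
    have h3 : (M + j + c) * a + j * d ≤ M * (a + d) := by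
      have : M ≤ M * d := Nat.le_mul_of_pos_right _ hd
      calc (M + j + c) * a + j * d = M * a + M := by rw [hM]; ring
        _ ≤ M * (a + d) := by rw [Nat.mul_add]; omega
    exact Nat.le_of_mul_le_mul_right (h2.trans (h1.trans h3)) (by omega)
  have hjc : j + c ≤ (j + c) * a := Nat.le_mul_of_pos_right _ ha0
  have hfeas : j + a ≤ k * (M + j + c - d) := by
    rw [← ceil_le k _ _ hk]; omega
  have hNd : d ≤ M + j + c := by
    have := Nat.zero_le ((j + a + k - 1) / k)
    generalize (j + a + k - 1) / k = C at *
    omega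
  have ez : sLen (can k (M + j + c - d) (j + a)) * a + sWt (can k (M + j + c - d) (j + a)) * d
      = (M + j + c) * a + j * d := by
    rw [can_len k _ _ hk hfeas, can_wt k _ _ hk]
    obtain ⟨e, he⟩ := Nat.exists_eq_add_of_le hNd
    rw [he, Nat.add_sub_cancel_left]; ring
  have ew : sLen (vec k (M + c) 1 j 0) * a + sWt (vec k (M + c) 1 j 0) * d
      = (M + j + c) * a + j * d := by
    rw [vec_len _ _ _ _ _ (by omega), vec_wt _ _ _ _ _ (by omega)]
    ring
  have w0 : vec k (M + c) 1 j 0 0 = M + c := by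
    have hk0 : (0 : ℕ) ≠ k := by omega
    simp [vec, hk0]
  have lw : linf (vec k (M + c) 1 j 0) = M + c := by
    rw [linf_eq _ M (hMbound _ ew) (by rw [w0]; omega), w0]
  have z0 : can k (M + j + c - d) (j + a) 0 = M := by
    have f := ceil_cases k (j + a) hk
    have hk0 : (0 : ℕ) ≠ k := by omega
    have e : can k (M + j + c - d) (j + a) 0 = (M + j + c - d - (j + a + k - 1) / k)
        + (if 0 = (j + a) % k then (j + a + k - 1) / k - (j + a) / k else 0) := by
      simp [can, vec, hk0]
      rfl
    rw [e]
    split_ifs <;> omega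
  have lz : linf (can k (M + j + c - d) (j + a)) = M := by
    rw [linf_eq _ M (hMbound _ ez) (by rw [z0]), z0]
  refine ⟨(M + j + c) * a + j * d, _, _, ez, ew, by rw [lw, lz], ?_⟩
  intro y hy
  rw [lw, lz]
  rintro ⟨h1, h2⟩
  have hb := hMbound y hy
  have hy0 : M ≤ y 0 := by
    by_contra hlt
    have := linf_le y M hb (by omega)
    omega
  rw [linf_eq y M hb hy0] at h1 h2
  obtain ⟨s, s1, s2, s3⟩ := tail_le y
  rcases Nat.lt_or_ge (sLen y) (M + j + c) with hn | hn
  · obtain ⟨t, t1, t2⟩ := len_diff a d _ _ _ _ hd hcop hn.le hy.symm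
    have ht : 1 ≤ t := by
      rcases Nat.eq_zero_or_pos t with h | h
      · subst h; omega
      · exact h
    have hdt : d ≤ d * t := Nat.le_mul_of_pos_right _ ht
    have hat : a ≤ a * t := Nat.le_mul_of_pos_right _ ht
    have : (j + a + k - 1) / k ≤ s := by
      rw [ceil_le k _ _ hk]; omega
    omega
  · obtain ⟨t, t1, t2⟩ := len_diff a d _ _ _ _ hd hcop hn hy
    have : 0 ≤ a * t := Nat.zero_le _
    omega

/-- For `S = ⟨a, a + d, …, a + kd⟩` with `2 ≤ k < a` and `gcd(a,d) = 1`, writing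
`a − 1 = qk + r` with `0 ≤ r < k`, one has `Δ∞(S) = {1, 2, …, q + d + 1}`. -/
theorem stmt_10 (a d k q r : ℕ) (hd : 1 ≤ d) (hk : 2 ≤ k) (hka : k < a)
    (hcop : Nat.Coprime a d) (hqr : a - 1 = q * k + r) (hr : r < k) :
    DeltaInfS (fun i : Fin (k + 1) => a + (i : ℕ) * d) = Set.Icc 1 (q + d + 1) := by
  have hmem : ∀ (z : Fin (k + 1) → ℕ) (x : ℕ),
      z ∈ Zfac (fun i : Fin (k + 1) => a + (i : ℕ) * d) x ↔ sLen z * a + sWt z * d = x := by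
    intro z x
    rw [← zval]
    rfl
  have hq : 1 ≤ q := by
    rcases Nat.eq_zero_or_pos q with h | h
    · subst h; omega
    · exact h
  have ha : a ≤ k * (q + 1) := by
    rw [Nat.mul_succ, mul_comm]; omega
  have h0 : (0 + a + k - 1) / k = q + 1 := by
    apply Nat.div_eq_of_lt_le
    · rw [Nat.succ_mul]; omega
    · rw [Nat.succ_mul, Nat.succ_mul]; omega
  ext c
  simp only [DeltaInfS, DeltaInf, deltaSet, Set.mem_iUnion, Set.mem_ofPred_eq, Set.mem_Icc]
  constructor
  · rintro ⟨x, u, ⟨z, hz, rfl⟩, v, ⟨w, hw, rfl⟩, huv, rfl, hno⟩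
    rw [hmem] at hz hw
    refine ⟨by omega, ?_⟩
    by_contra hlt
    have hr := reach_all a d q hd hk hcop hq ha z w (hz.trans hw.symm)
    have := reach_low (u := linf z) (v := linf w) hr hz le_rfl (by omega)
      (fun y hy => hno _ ⟨y, (hmem y x).2 hy, rfl⟩)
    omega
  · rintro ⟨hc1, hc⟩
    obtain ⟨x, z, w, hz, hw, e, hno⟩ := realize a d k q c hd hk (by omega) hcop hc1 hc h0
    refine ⟨x, linf z, ⟨z, (hmem z x).2 hz, rfl⟩, linf w, ⟨w, (hmem w x).2 hw, rfl⟩,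
      by omega, by omega, ?_⟩
    rintro _ ⟨y, hy, rfl⟩
    exact hno y ((hmem y x).1 hy)
end

section
/- Let a, b be coprime integers with 2 ≤ a < b, let k ≥ 2, and let S = ⟨a_1, …, a_k⟩ where a_i = a^{k−i} b^{i−1} for i = 1, …, k (generators forming a geometric sequence). Then Δ_0(S) = {1}. -/
open Finset

lemma lzero_add_single {k : ℕ} (c : Fin k → ℕ) (i : Fin k) (m : ℕ) :
    lzero c ≤ lzero (c + Pi.single i m) ∧ lzero (c + Pi.single i m) ≤ lzero c + 1 := by
  unfold lzero
  constructor
  · apply Finset.card_le_card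
    intro j hj
    simp only [Finset.mem_filter, Finset.mem_univ, true_and, Pi.add_apply] at hj ⊢
    omega
  · refine le_trans (Finset.card_le_card ?_) (Finset.card_insert_le i _)
    intro j hj
    simp only [Finset.mem_filter, Finset.mem_univ, true_and, Pi.add_apply,
      Finset.mem_insert] at hj ⊢
    by_cases h : j = i
    · exact Or.inl h
    · right
      simpa [Pi.single_apply, h] using hj

/-- Elementary trade `b e_i → a e_{i+1}`. -/
def GStep (a b : ℕ) {k : ℕ} (z w : Fin k → ℕ) : Prop :=
  ∃ (c : Fin k → ℕ) (i i' : Fin k), (i' : ℕ) = i + 1 ∧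
    z = c + Pi.single i b ∧ w = c + Pi.single i' a

lemma sum_add_single {k : ℕ} (g c : Fin k → ℕ) (i : Fin k) (m : ℕ) :
    ∑ j, (c + Pi.single i m : Fin k → ℕ) j * g j = ∑ j, c j * g j + m * g i := by
  simp [add_mul, Finset.sum_add_distrib, Pi.single_apply]

lemma GStep.sum_eq {a b k : ℕ} {z w : Fin k → ℕ} (h : GStep a b z w) :
    ∑ j, z j * (a ^ (k - 1 - (j : ℕ)) * b ^ (j : ℕ)) =
    ∑ j, w j * (a ^ (k - 1 - (j : ℕ)) * b ^ (j : ℕ)) := by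
  obtain ⟨c, i, i', hi, rfl, rfl⟩ := h
  rw [sum_add_single (fun j : Fin k => a ^ (k - 1 - (j : ℕ)) * b ^ (j : ℕ)),
    sum_add_single (fun j : Fin k => a ^ (k - 1 - (j : ℕ)) * b ^ (j : ℕ))]
  have h1 : k - 1 - (i : ℕ) = (k - 1 - (i' : ℕ)) + 1 := by
    have := i'.2
    omega
  simp only [h1, hi]
  ring

lemma exists_nf {a b k : ℕ} (hab : a < b) : ∀ (n : ℕ) (z : Fin k → ℕ), ∑ j, z j = n →
    ∃ w, Relation.ReflTransGen (GStep a b) z w ∧ ∀ i : Fin k, (i : ℕ) + 1 < k → w i < b := by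
  intro n
  induction n using Nat.strong_induction_on with
  | _ n ih =>
    intro z hz
    by_cases h : ∀ i : Fin k, (i : ℕ) + 1 < k → z i < b
    · exact ⟨z, Relation.ReflTransGen.refl, h⟩
    · push Not at h
      obtain ⟨i, hi, hb⟩ := h
      have hzc : z = (z - Pi.single i b) + Pi.single i b := by
        funext j
        by_cases hj : j = i
        · subst hj
          simp
          omega
        · simp [Pi.single_apply, hj]
      set c := z - Pi.single i b with hc
      let i' : Fin k := ⟨i + 1, hi⟩
      have hs : GStep a b z (c + Pi.single i' a) := ⟨c, i, i', rfl, hzc, rfl⟩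
      have e1 := sum_add_single (fun _ => 1) c i b
      have e2 := sum_add_single (fun _ => 1) c i' a
      rw [← hzc] at e1
      simp only [mul_one] at e1 e2
      obtain ⟨w, hw, hn⟩ := ih _ (by omega) (c + Pi.single i' a) rfl
      exact ⟨w, Relation.ReflTransGen.head hs hw, hn⟩

lemma nf_unique {a b k : ℕ} (ha : 2 ≤ a) (hab : a < b) (hcop : Nat.Coprime a b)
    (z w : Fin k → ℕ) (hz : ∀ i : Fin k, (i : ℕ) + 1 < k → z i < b)
    (hw : ∀ i : Fin k, (i : ℕ) + 1 < k → w i < b)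
    (h : ∑ j, z j * (a ^ (k - 1 - (j : ℕ)) * b ^ (j : ℕ)) =
    ∑ j, w j * (a ^ (k - 1 - (j : ℕ)) * b ^ (j : ℕ))) : z = w := by
  have h0 : ∑ j : Fin k, ((z j : ℤ) - w j) * ((a : ℤ) ^ (k - 1 - (j : ℕ)) * (b : ℤ) ^ (j : ℕ)) = 0 := by
    simp only [sub_mul, Finset.sum_sub_distrib]
    rw [sub_eq_zero]
    exact_mod_cast h
  have key : ∀ (n : ℕ) (i : Fin k), (i : ℕ) = n → z i = w i := by
    intro n
    induction n using Nat.strong_induction_on with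
    | _ n ih =>
      intro i hin
      have hb0 : (b : ℤ) ≠ 0 := by exact_mod_cast (by omega : b ≠ 0)
      have ha0 : (a : ℤ) ≠ 0 := by exact_mod_cast (by omega : a ≠ 0)
      rw [← Finset.add_sum_erase _ _ (Finset.mem_univ i)] at h0
      by_cases hi : (i : ℕ) + 1 < k
      · have hd : (b : ℤ) ^ ((i : ℕ) + 1) ∣ ∑ j ∈ Finset.univ.erase i,
            ((z j : ℤ) - w j) * ((a : ℤ) ^ (k - 1 - (j : ℕ)) * (b : ℤ) ^ (j : ℕ)) := by
          apply Finset.dvd_sum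
          intro j hj
          have hne : (j : ℕ) ≠ i := fun e => (Finset.mem_erase.1 hj).1 (Fin.ext e)
          rcases Nat.lt_or_gt_of_ne hne with hlt | hgt
          · rw [ih j (by omega) j rfl]
            simp
          · exact Dvd.dvd.mul_left (Dvd.dvd.mul_left (pow_dvd_pow _ hgt) _) _
        have hd2 : (b : ℤ) ^ ((i : ℕ) + 1) ∣
            ((z i : ℤ) - w i) * ((a : ℤ) ^ (k - 1 - (i : ℕ)) * (b : ℤ) ^ (i : ℕ)) := by
          rw [eq_neg_of_add_eq_zero_left h0]
          exact (dvd_neg).2 hd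
        rw [pow_succ', ← mul_assoc] at hd2
        have hd3 := (mul_dvd_mul_iff_right (pow_ne_zero _ hb0)).1 hd2
        have hc : IsCoprime (b : ℤ) ((a : ℤ) ^ (k - 1 - (i : ℕ))) :=
          (Nat.isCoprime_iff_coprime.2 hcop.symm).pow_right
        have hd4 := hc.dvd_of_dvd_mul_right hd3
        have h1 := hz i hi
        have h2 := hw i hi
        have := Int.eq_zero_of_abs_lt_dvd hd4 (by rw [abs_lt]; constructor <;> omega)
        omega
      · rw [Finset.sum_eq_zero, add_zero] at h0
        · have := (mul_eq_zero.1 h0).resolve_right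
            (mul_ne_zero (pow_ne_zero _ ha0) (pow_ne_zero _ hb0))
          omega
        · intro j hj
          have hne : (j : ℕ) ≠ i := fun e => (Finset.mem_erase.1 hj).1 (Fin.ext e)
          have := j.2
          rw [ih j (by omega) j rfl]
          simp
  funext i
  exact key i i rfl

lemma path_inv {a b k u v : ℕ} (huv : u + 2 ≤ v) {x : ℕ}
    (hT : ∀ t ∈ LzeroSet (fun i : Fin k => a ^ (k - 1 - (i : ℕ)) * b ^ (i : ℕ)) x,
      ¬(u < t ∧ t < v)) {z w : Fin k → ℕ}
    (h : Relation.ReflTransGen (GStep a b) z w)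
    (hz : z ∈ Zfac (fun i : Fin k => a ^ (k - 1 - (i : ℕ)) * b ^ (i : ℕ)) x) :
    w ∈ Zfac (fun i : Fin k => a ^ (k - 1 - (i : ℕ)) * b ^ (i : ℕ)) x ∧
    (lzero z ≤ u ↔ lzero w ≤ u) := by
  induction h with
  | refl => exact ⟨hz, Iff.rfl⟩
  | tail _ hs ih =>
    rename_i p q _
    obtain ⟨hp, hiff⟩ := ih
    have hq : q ∈ Zfac (fun i : Fin k => a ^ (k - 1 - (i : ℕ)) * b ^ (i : ℕ)) x :=
      (GStep.sum_eq hs).symm.trans hp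
    refine ⟨hq, hiff.trans ?_⟩
    have h1 := hT _ ⟨p, hp, rfl⟩
    have h2 := hT _ ⟨q, hq, rfl⟩
    obtain ⟨c, i, i', hi, rfl, rfl⟩ := hs
    have h3 := lzero_add_single c i b
    have h4 := lzero_add_single c i' a
    omega

/-- For `S = ⟨a^{k−1}, a^{k−2}b, …, b^{k−1}⟩` with `2 ≤ a < b` coprime, `Δ₀(S) = {1}`. -/
theorem stmt_13 (a b k : ℕ) (ha : 2 ≤ a) (hab : a < b) (hcop : Nat.Coprime a b)
    (hk : 2 ≤ k) :
    DeltaZeroS (fun i : Fin k => a ^ (k - 1 - (i : ℕ)) * b ^ (i : ℕ)) = {1} := by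
  apply Set.Subset.antisymm
  · intro d hd
    obtain ⟨x, u, ⟨p, hp, hpu⟩, v, ⟨q, hq, hqv⟩, huv, hd, hT⟩ := Set.mem_iUnion.1 hd
    rw [Set.mem_singleton_iff]
    by_contra hne
    have h2 : u + 2 ≤ v := by omega
    obtain ⟨p', hp', hpn⟩ := exists_nf hab _ p rfl
    obtain ⟨q', hq', hqn⟩ := exists_nf hab _ q rfl
    obtain ⟨m1, i1⟩ := path_inv h2 hT hp' hp
    obtain ⟨m2, i2⟩ := path_inv h2 hT hq' hq
    have : p' = q' := nf_unique ha hab hcop p' q' hpn hqn (Eq.trans m1 (Eq.symm m2))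
    subst this
    omega
  · intro d hd
    rw [Set.mem_singleton_iff] at hd
    subst hd
    let i : Fin k := ⟨0, by omega⟩
    let i' : Fin k := ⟨1, by omega⟩
    have hne : i ≠ i' := by simp [i, i']
    have hs : GStep a b (Pi.single i 1 + Pi.single i b) (Pi.single i 1 + Pi.single i' a) :=
      ⟨_, i, i', rfl, rfl, rfl⟩
    refine Set.mem_iUnion.2 ⟨_, 1, ⟨Pi.single i 1 + Pi.single i b, rfl, ?_⟩, 2,
      ⟨Pi.single i 1 + Pi.single i' a, (GStep.sum_eq hs).symm, ?_⟩, by omega, rfl,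
      fun t _ => by omega⟩
    · unfold lzero
      rw [Finset.card_eq_one]
      refine ⟨i, ?_⟩
      ext j
      by_cases hj : j = i <;> simp [Pi.single_apply, hj]
    · unfold lzero
      rw [Finset.card_eq_two]
      refine ⟨i, i', hne, ?_⟩
      ext j
      by_cases hj : j = i
      · simp [hj]
      · by_cases hj' : j = i'
        · simp [hj']
          omega
        · simp [Pi.single_apply, hj, hj']
end
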